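/- Let Π be a bounded DatalogMTL program in normal form, D a bounded dataset, Q(s)@ϱ a query, and (Π′,D′) = MagicRewriting(Π,D,Q(s)@(−∞,+∞)), with γ₀ the adornment of Q used by the rewriting. Let Π″ = Π′ ∪ {m_Q^{γ₀}(bt(s,γ₀)) ← ⊤}. Let ℑ₀,ℑ₁,… be the iterates of (Π″,D) and ℑ′₀,ℑ′₁,… the iterates of (Π′,D′). Then ℑ′_i = ℑ_{i+1} for every i ≥ 0. -/

import Mathlib

/-! Write `P'` for the magic program, `P''` for `P' ∪ {m_Q ← ⊤}` and `D'` for `D` with the magic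
fact on all of `ℚ`. Every rule of `P'` has a body atom `◇ m_R(..)` over a magic predicate
(`exists_magic_atom_of_mem_magicProgram`), so none of them fires on the least model of `D`, which
only mentions base predicates. Hence the first application of `T_{P''}` to the least model of `D`
adds exactly the magic fact at all time points, which gives the least model of `D'`
(`TP_leastModel_eq`). Afterwards the rule `m_Q ← ⊤` is redundant, because `T` is inflationary and
the magic fact is already present, so `T_{P'}` and `T_{P''}` agree (`TP_union_topRule`). The shift
follows by induction. -/

/-! # DatalogMTL: syntax, semantics, and the magic-set rewriting -/

/-- Terms: variables and constants (names are strings). -/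
inductive Term where
  | var (v : String)
  | const (c : String)
deriving DecidableEq

/-- An adornment is a list of booleans (`true` = bound `b`, `false` = free `f`). -/
abbrev Adornment := List Bool

/-- Predicates: the base predicates of the input, adorned predicates `R^γ`
(used during the rewriting), and the fresh magic predicates `m_R^γ`. -/
inductive PredSym where
  | base (name : String)
  | adorned (name : String) (γ : Adornment)
  | magic (name : String) (γ : Adornment)
deriving DecidableEq

/-- An interval of rationals, given by optional endpoints (`none` = infinite)
and openness flags. -/
structure Ivl where
  lo : Option ℚ
  hi : Option ℚ
  loOpen : Bool
  hiOpen : Bool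
deriving DecidableEq

namespace Ivl

/-- membership of a time point in an interval -/
def mem (t : ℚ) (ρ : Ivl) : Prop :=
  (match ρ.lo with
   | none => True
   | some a => if ρ.loOpen then a < t else a ≤ t) ∧
  (match ρ.hi with
   | none => True
   | some b => if ρ.hiOpen then t < b else t ≤ b)

/-- the punctual interval `[t,t]` -/
def punctual (t : ℚ) : Ivl := ⟨some t, some t, false, false⟩

/-- the interval `(-∞, +∞)` -/
def all : Ivl := ⟨none, none, true, true⟩

/-- nonemptiness of an interval -/
def NE (ρ : Ivl) : Prop := ∃ t, ρ.mem t

/-- an interval containing only non-negative rationals -/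
def Nonneg (ρ : Ivl) : Prop := ∀ t, ρ.mem t → 0 ≤ t

/-- a bounded interval (both endpoints rational) -/
def Bounded (ρ : Ivl) : Prop := ρ.lo.isSome ∧ ρ.hi.isSome

end Ivl

/-- Metric atoms. -/
inductive MAtom where
  | top
  | bot
  | rel (p : PredSym) (ts : List Term)
  | boxPlus (ρ : Ivl) (M : MAtom)
  | boxMinus (ρ : Ivl) (M : MAtom)
  | diaPlus (ρ : Ivl) (M : MAtom)
  | diaMinus (ρ : Ivl) (M : MAtom)
  | until_ (ρ : Ivl) (M₂ M₁ : MAtom)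
  | since_ (ρ : Ivl) (M₂ M₁ : MAtom)
deriving DecidableEq

namespace Term

def vars : Term → List String
  | .var v => [v]
  | .const _ => []

end Term

namespace MAtom

/-- variables occurring in a metric atom -/
def vars : MAtom → List String
  | .top | .bot => []
  | .rel _ ts => ts.flatMap Term.vars
  | .boxPlus _ M | .boxMinus _ M | .diaPlus _ M | .diaMinus _ M => M.vars
  | .until_ _ M₂ M₁ | .since_ _ M₂ M₁ => M₂.vars ++ M₁.vars

/-- predicates occurring in a metric atom -/
def preds : MAtom → List PredSym
  | .top | .bot => []
  | .rel p _ => [p]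
  | .boxPlus _ M | .boxMinus _ M | .diaPlus _ M | .diaMinus _ M => M.preds
  | .until_ _ M₂ M₁ | .since_ _ M₂ M₁ => M₂.preds ++ M₁.preds

/-- intervals mentioned by the MTL operators of a metric atom -/
def ivls : MAtom → List Ivl
  | .top | .bot | .rel _ _ => []
  | .boxPlus ρ M | .boxMinus ρ M | .diaPlus ρ M | .diaMinus ρ M => ρ :: M.ivls
  | .until_ ρ M₂ M₁ | .since_ ρ M₂ M₁ => ρ :: (M₂.ivls ++ M₁.ivls)

/-- a metric atom legal as a rule head: mentions no `⊥`, `◇⁺`, `◇⁻`, `U`, `S` -/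
def headOK : MAtom → Prop
  | .top => True
  | .bot => False
  | .rel _ _ => True
  | .boxPlus _ M => M.headOK
  | .boxMinus _ M => M.headOK
  | .diaPlus _ _ | .diaMinus _ _ | .until_ _ _ _ | .since_ _ _ _ => False

/-- well-formedness: all operator intervals are nonempty and contain only
non-negative rationals -/
def WF : MAtom → Prop
  | .top | .bot | .rel _ _ => True
  | .boxPlus ρ M | .boxMinus ρ M | .diaPlus ρ M | .diaMinus ρ M =>
      ρ.NE ∧ ρ.Nonneg ∧ M.WF
  | .until_ ρ M₂ M₁ | .since_ ρ M₂ M₁ => ρ.NE ∧ ρ.Nonneg ∧ M₂.WF ∧ M₁.WF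

/-- applying a substitution (mapping variables to constants) to a metric atom -/
def subst (σ : String → String) : MAtom → MAtom
  | .top => .top
  | .bot => .bot
  | .rel p ts =>
      .rel p (ts.map fun tm => match tm with
        | .var v => .const (σ v)
        | .const c => .const c)
  | .boxPlus ρ M => .boxPlus ρ (M.subst σ)
  | .boxMinus ρ M => .boxMinus ρ (M.subst σ)
  | .diaPlus ρ M => .diaPlus ρ (M.subst σ)
  | .diaMinus ρ M => .diaMinus ρ (M.subst σ)
  | .until_ ρ M₂ M₁ => .until_ ρ (M₂.subst σ) (M₁.subst σ)
  | .since_ ρ M₂ M₁ => .since_ ρ (M₂.subst σ) (M₁.subst σ)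

/-- an atom without MTL operators -/
def isBasic : MAtom → Prop
  | .top | .bot | .rel _ _ => True
  | _ => False

/-- no nested MTL operators -/
def nonNested : MAtom → Prop
  | .top | .bot | .rel _ _ => True
  | .boxPlus _ M | .boxMinus _ M | .diaPlus _ M | .diaMinus _ M => M.isBasic
  | .until_ _ M₂ M₁ | .since_ _ M₂ M₁ => M₂.isBasic ∧ M₁.isBasic

/-- a normal-form head: `⊞_ϱ R(s)` or `⊟_ϱ R(s)` -/
def headNF : MAtom → Prop
  | .boxPlus _ (.rel _ _) => True
  | .boxMinus _ (.rel _ _) => True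
  | _ => False

/-- whether a magic predicate occurs in the atom -/
def containsMagic (M : MAtom) : Prop :=
  ∃ p ∈ M.preds, ∃ n γ, p = PredSym.magic n γ

end MAtom

/-- A rule `head ← body`. -/
structure Rule where
  head : MAtom
  body : List MAtom
deriving DecidableEq

/-- A program is a set of rules (finiteness is part of `ProgramWF`). -/
abbrev Program := Set Rule

/-- A substitution maps variable names to constant names. -/
abbrev Subst := String → String

/-- A fact `R(c)@ϱ`. -/
structure TFact where
  pred : PredSym
  args : List String
  ivl : Ivl
deriving DecidableEq

/-- A dataset is a set of facts (finiteness is part of `DatasetWF`). -/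
abbrev Dataset := Set TFact

/-- An interpretation maps each rational time point to a set of ground
relational atoms (predicate together with a tuple of constants). -/
abbrev Interp := ℚ → Set (PredSym × List String)

/-- Satisfaction of a (ground) metric atom at a time point. -/
def satAt (ℑ : Interp) : ℚ → MAtom → Prop
  | _, .top => True
  | _, .bot => False
  | t, .rel p ts => ∃ cs : List String, ts = cs.map Term.const ∧ (p, cs) ∈ ℑ t
  | t, .boxPlus ρ M => ∀ t₁ : ℚ, Ivl.mem (t₁ - t) ρ → satAt ℑ t₁ M
  | t, .boxMinus ρ M => ∀ t₁ : ℚ, Ivl.mem (t - t₁) ρ → satAt ℑ t₁ M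
  | t, .diaPlus ρ M => ∃ t₁ : ℚ, Ivl.mem (t₁ - t) ρ ∧ satAt ℑ t₁ M
  | t, .diaMinus ρ M => ∃ t₁ : ℚ, Ivl.mem (t - t₁) ρ ∧ satAt ℑ t₁ M
  | t, .until_ ρ M₂ M₁ =>
      ∃ t₁ : ℚ, Ivl.mem (t₁ - t) ρ ∧ satAt ℑ t₁ M₁ ∧
        ∀ t₂ : ℚ, t < t₂ → t₂ < t₁ → satAt ℑ t₂ M₂
  | t, .since_ ρ M₂ M₁ =>
      ∃ t₁ : ℚ, Ivl.mem (t - t₁) ρ ∧ satAt ℑ t₁ M₁ ∧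
        ∀ t₂ : ℚ, t₁ < t₂ → t₂ < t → satAt ℑ t₂ M₂

/-- Satisfaction of a fact. -/
def satFact (ℑ : Interp) (g : TFact) : Prop :=
  ∀ t : ℚ, Ivl.mem t g.ivl → (g.pred, g.args) ∈ ℑ t

/-- An interpretation satisfies a rule if it satisfies all its ground instances. -/
def modelsRule (ℑ : Interp) (r : Rule) : Prop :=
  ∀ σ : Subst, ∀ t : ℚ,
    (∀ M ∈ r.body, satAt ℑ t (M.subst σ)) → satAt ℑ t (r.head.subst σ)

/-- model of a program -/
def modelsProg (ℑ : Interp) (P : Program) : Prop := ∀ r ∈ P, modelsRule ℑ r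

/-- model of a dataset -/
def modelsData (ℑ : Interp) (D : Dataset) : Prop := ∀ g ∈ D, satFact ℑ g

/-- Entailment `(P, D) ⊨ g`. -/
def entails (P : Program) (D : Dataset) (g : TFact) : Prop :=
  ∀ ℑ : Interp, modelsProg ℑ P → modelsData ℑ D → satFact ℑ g

/-- The least model `ℑ_D` of a dataset. -/
def leastModel (D : Dataset) : Interp :=
  fun t => {a | ∃ g ∈ D, g.pred = a.1 ∧ g.args = a.2 ∧ Ivl.mem t g.ivl}

/-- The immediate consequence operator `T_P`: the least interpretation
containing `ℑ` such that whenever the body of a ground instance of a rule of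
`P` holds in `ℑ` at `t`, its head holds in the result at `t`. -/
def TP (P : Program) (ℑ : Interp) : Interp :=
  fun t =>
    ⋂ J ∈ {J : Interp |
      (∀ u : ℚ, ℑ u ⊆ J u) ∧
      ∀ r ∈ P, ∀ σ : Subst, ∀ u : ℚ,
        (∀ M ∈ r.body, satAt ℑ u (M.subst σ)) → satAt J u (r.head.subst σ)},
    J t

/-- The (finite) iterates `ℑ₀ = ℑ_D`, `ℑ_{i+1} = T_P(ℑ_i)` of a pair `(P,D)`. -/
def iterates (P : Program) (D : Dataset) : ℕ → Interp
  | 0 => leastModel D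
  | n + 1 => TP P (iterates P D n)

/-- `g` has birth round `i` regarding `(P,D)`. -/
def birthEq (g : TFact) (P : Program) (D : Dataset) (i : ℕ) : Prop :=
  satFact (iterates P D i) g ∧ (i = 0 ∨ ¬ satFact (iterates P D (i - 1)) g)

/-- `g` has a (finite) birth round regarding `(P,D)`. -/
def hasBirth (g : TFact) (P : Program) (D : Dataset) : Prop :=
  ∃ i : ℕ, birthEq g P D i

/-- The canonical interpretation `C_{P,D}` (the least model of `(P,D)`). -/
def canonInterp (P : Program) (D : Dataset) : Interp :=
  fun t => ⋂ J ∈ {J : Interp | modelsProg J P ∧ modelsData J D}, J t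

/-- well-formed rule: nonempty body, legal well-formed head and body, safe -/
def RuleWF (r : Rule) : Prop :=
  r.body ≠ [] ∧ r.head.headOK ∧ r.head.WF ∧ (∀ M ∈ r.body, M.WF) ∧
  (∀ v ∈ r.head.vars, ∃ M ∈ r.body, v ∈ M.vars)

/-- all predicates of the rule are base predicates (magic and adorned
predicates are fresh) -/
def Rule.predsBase (r : Rule) : Prop :=
  ∀ p ∈ r.head.preds ++ r.body.flatMap MAtom.preds, ∃ n, p = PredSym.base n

/-- well-formed program: finite set of well-formed safe rules over base predicates -/
def ProgramWF (P : Program) : Prop :=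
  P.Finite ∧ ∀ r ∈ P, RuleWF r ∧ r.predsBase

/-- well-formed dataset: finite set of facts with nonempty intervals, over base
predicates -/
def DatasetWF (D : Dataset) : Prop :=
  D.Finite ∧ ∀ g ∈ D, g.ivl.NE ∧ ∃ n, g.pred = PredSym.base n

/-- normal form: no nested operators and every head of the form `⊞_ϱ R(s)`
or `⊟_ϱ R(s)` -/
def NormalForm (P : Program) : Prop :=
  ∀ r ∈ P, r.head.headNF ∧ ∀ M ∈ r.body, M.nonNested

/-- bounded program -/
def ProgramBounded (P : Program) : Prop :=
  ∀ r ∈ P, ∀ ρ ∈ r.head.ivls ++ r.body.flatMap MAtom.ivls, ρ.Bounded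

/-- bounded dataset -/
def DatasetBounded (D : Dataset) : Prop := ∀ g ∈ D, g.ivl.Bounded

/-! ## The magic-set rewriting -/

/-- `bt(s,γ)`: the subsequence of terms of `s` bound according to `γ` -/
def bt (ts : List Term) (γ : Adornment) : List Term :=
  ((ts.zip γ).filter fun p => p.2).map Prod.fst

/-- `bv(s,γ)`: the subsequence of variables of `s` bound according to `γ` -/
def bv (ts : List Term) (γ : Adornment) : List Term :=
  (bt ts γ).filter fun tm => match tm with | .var _ => true | .const _ => false

/-- `bt` on a ground tuple of constants -/
def btC (cs : List String) (γ : Adornment) : List String :=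
  ((cs.zip γ).filter fun p => p.2).map Prod.fst

/-- the adornment of the query: `b` exactly at the positions holding constants -/
def adornOfTerms (ts : List Term) : Adornment :=
  ts.map fun tm => match tm with | .const _ => true | .var _ => false

/-- adornment of a tuple given the list `B` of bound variables: constants and
variables from `B` are bound -/
def adornTerms (B : List String) (ts : List Term) : Adornment :=
  ts.map fun tm => match tm with | .const _ => true | .var v => B.contains v

/-- the head predicate name of a (normal-form) rule -/
def headName (r : Rule) : Option String :=
  match r.head with
  | .boxPlus _ (.rel (.base n) _) => some n
  | .boxMinus _ (.rel (.base n) _) => some n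
  | .rel (.base n) _ => some n
  | _ => none

/-- the argument tuple of the head of a (normal-form) rule -/
def headArgs (r : Rule) : List Term :=
  match r.head with
  | .boxPlus _ (.rel _ ts) => ts
  | .boxMinus _ (.rel _ ts) => ts
  | .rel _ ts => ts
  | _ => []

/-- `n` is an idb predicate in `P`: it occurs in the head of some rule -/
def isIdbName (P : Program) (n : String) : Prop :=
  ∃ r ∈ P, headName r = some n

/-- adorn a base predicate occurring with argument tuple `ts`, given
bound variables `B` -/
def adornPredOf (B : List String) (p : PredSym) (ts : List Term) : PredSym :=
  match p with
  | .base n => .adorned n (adornTerms B ts)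
  | _ => p

/-- adorn all relational atoms of a metric atom, given bound variables `B` -/
def MAtom.adornWith (B : List String) : MAtom → MAtom
  | .top => .top
  | .bot => .bot
  | .rel p ts => .rel (adornPredOf B p ts) ts
  | .boxPlus ρ M => .boxPlus ρ (M.adornWith B)
  | .boxMinus ρ M => .boxMinus ρ (M.adornWith B)
  | .diaPlus ρ M => .diaPlus ρ (M.adornWith B)
  | .diaMinus ρ M => .diaMinus ρ (M.adornWith B)
  | .until_ ρ M₂ M₁ => .until_ ρ (M₂.adornWith B) (M₁.adornWith B)
  | .since_ ρ M₂ M₁ => .since_ ρ (M₂.adornWith B) (M₁.adornWith B)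

/-- adorn the head of a (normal-form) rule with `γ` -/
def adornHead (γ : Adornment) : MAtom → MAtom
  | .boxPlus ρ (.rel (.base n) ts) => .boxPlus ρ (.rel (.adorned n γ) ts)
  | .boxMinus ρ (.rel (.base n) ts) => .boxMinus ρ (.rel (.adorned n γ) ts)
  | M => M

/-- variables of the head bound according to `γ` -/
def headBoundVars (r : Rule) (γ : Adornment) : List String :=
  (bv (headArgs r) γ).flatMap Term.vars

/-- the adorned version of rule `r` for head adornment `γ`: an occurrence of
a variable in the `i`-th body atom is bound iff the variable is bound in the
head or occurs in a body atom strictly to the left -/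
def adornRule (r : Rule) (γ : Adornment) : Rule :=
  ⟨adornHead γ r.head,
   r.body.mapIdx fun i M =>
     M.adornWith (headBoundVars r γ ++ (r.body.take i).flatMap MAtom.vars)⟩

/-- the adorned idb predicates reachable by the adornment procedure started
from `Q^{γ₀}` -/
inductive Reach (P : Program) (Q : String) (γ₀ : Adornment) :
    String → Adornment → Prop where
  | init : Reach P Q γ₀ Q γ₀
  | step {R : String} {γ : Adornment} {S : String} {γ' : Adornment} (r : Rule) :
      Reach P Q γ₀ R γ → r ∈ P → headName r = some R →
      (∃ M ∈ (adornRule r γ).body, PredSym.adorned S γ' ∈ M.preds) →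
      isIdbName P S →
      Reach P Q γ₀ S γ'

/-- the adorned program `P_a` -/
def adornedProg (P : Program) (Q : String) (γ₀ : Adornment) : Set Rule :=
  {ra | ∃ r ∈ P, ∃ R γ, Reach P Q γ₀ R γ ∧ headName r = some R ∧
    ra = adornRule r γ}

/-- the magic body atom added for an adorned head -/
def magicBodyAtom : MAtom → Option MAtom
  | .boxPlus ρ (.rel (.adorned R γ) s) =>
      some (.diaPlus ρ (.rel (.magic R γ) (bv s γ)))
  | .boxMinus ρ (.rel (.adorned R γ) s) =>
      some (.diaMinus ρ (.rel (.magic R γ) (bv s γ)))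
  | _ => none

/-- the rules `P1x` of the first type -/
def magicProg1 (Pa : Set Rule) : Set Rule :=
  {r' | ∃ r ∈ Pa, ∃ m, magicBodyAtom r.head = some m ∧
    r' = ⟨r.head, m :: r.body⟩}

open Classical in
/-- replacing every adorned idb relational atom `R^γ(s)` by `m_R^γ(bv(s,γ))` -/
noncomputable def magicize (P : Program) : MAtom → MAtom
  | .top => .top
  | .bot => .bot
  | .rel p ts =>
      match p with
      | .adorned n γ =>
          if isIdbName P n then .rel (.magic n γ) (bv ts γ) else .rel (.adorned n γ) ts
      | _ => .rel p ts
  | .boxPlus ρ M => .boxPlus ρ (magicize P M)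
  | .boxMinus ρ M => .boxMinus ρ (magicize P M)
  | .diaPlus ρ M => .diaPlus ρ (magicize P M)
  | .diaMinus ρ M => .diaMinus ρ (magicize P M)
  | .until_ ρ M₂ M₁ => .until_ ρ (magicize P M₂) (magicize P M₁)
  | .since_ ρ M₂ M₁ => .since_ ρ (magicize P M₂) (magicize P M₁)

/-- `MagicHeadAtoms` -/
noncomputable def magicHeadAtoms (P : Program) (M : MAtom) : Set MAtom :=
  match magicize P M with
  | .boxPlus ρ M₁ => {MAtom.boxPlus ρ M₁}
  | .boxMinus ρ M₁ => {MAtom.boxMinus ρ M₁}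
  | .diaPlus ρ M₁ => {MAtom.boxPlus ρ M₁}
  | .diaMinus ρ M₁ => {MAtom.boxMinus ρ M₁}
  | .since_ ρ M₂ M₁ =>
      {A | (M₂.containsMagic ∧ A = MAtom.boxMinus ⟨some 0, ρ.hi, false, false⟩ M₂) ∨
           (M₁.containsMagic ∧ A = MAtom.boxMinus ρ M₁)}
  | .until_ ρ M₂ M₁ =>
      {A | (M₂.containsMagic ∧ A = MAtom.boxPlus ⟨some 0, ρ.hi, false, false⟩ M₂) ∨
           (M₁.containsMagic ∧ A = MAtom.boxPlus ρ M₁)}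
  | M' => {M'}

/-- a (adorned) body atom whose predicate is idb in `P` -/
def atomIdb (P : Program) (M : MAtom) : Prop :=
  ∃ n γ, PredSym.adorned n γ ∈ M.preds ∧ isIdbName P n

/-- the rules `P2x` of the second type -/
noncomputable def magicProg2 (P : Program) (P1 : Set Rule) : Set Rule :=
  {r' | ∃ r ∈ P1, ∃ i : ℕ, ∃ M, r.body[i]? = some M ∧ atomIdb P M ∧
    ∃ M' ∈ magicHeadAtoms P M, r' = ⟨M', r.body.take i⟩}

/-- deleting adornments from non-magic predicates -/
def PredSym.unadorn : PredSym → PredSym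
  | .adorned n _ => .base n
  | p => p

def MAtom.unadorn : MAtom → MAtom
  | .top => .top
  | .bot => .bot
  | .rel p ts => .rel p.unadorn ts
  | .boxPlus ρ M => .boxPlus ρ M.unadorn
  | .boxMinus ρ M => .boxMinus ρ M.unadorn
  | .diaPlus ρ M => .diaPlus ρ M.unadorn
  | .diaMinus ρ M => .diaMinus ρ M.unadorn
  | .until_ ρ M₂ M₁ => .until_ ρ M₂.unadorn M₁.unadorn
  | .since_ ρ M₂ M₁ => .since_ ρ M₂.unadorn M₁.unadorn

def Rule.unadorn (r : Rule) : Rule :=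
  ⟨r.head.unadorn, r.body.map MAtom.unadorn⟩

/-- the program `Pm` produced by `MagicRewriting(P, D, Q(s)@ϱ)`
(it does not depend on `D` nor on `ϱ`) -/
noncomputable def magicProgram (P : Program) (Q : String) (s : List Term) :
    Set Rule :=
  Rule.unadorn ''
    (magicProg1 (adornedProg P Q (adornOfTerms s)) ∪
     magicProg2 P (magicProg1 (adornedProg P Q (adornOfTerms s))))

def termToConst : Term → String
  | .const c => c
  | .var v => v

/-- the magic fact `m_Q^{γ₀}(bt(s,γ₀))@ϱ` added to the dataset -/
def magicFact (Q : String) (s : List Term) (ρ : Ivl) : TFact :=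
  ⟨.magic Q (adornOfTerms s), (bt s (adornOfTerms s)).map termToConst, ρ⟩

/-- the dataset `D′` produced by `MagicRewriting(P, D, Q(s)@ϱ)` -/
def magicDataset (D : Dataset) (Q : String) (s : List Term) (ρ : Ivl) :
    Dataset :=
  D ∪ {magicFact Q s ρ}

/-- `σ(s)` as a ground tuple of constants -/
def groundTuple (σ : Subst) (s : List Term) : List String :=
  s.map fun tm => match tm with | .var v => σ v | .const c => c

/-- `toRule(R(c)@(−∞,+∞))` is the rule `R(c) ← ⊤` -/
def TFact.toRule (g : TFact) : Rule :=
  ⟨.rel g.pred (g.args.map Term.const), [.top]⟩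

/-- `swap(E)` -/
def swapE (E : Set TFact) : Set Rule := TFact.toRule '' E

/-- the rule `m_Q^{γ₀}(bt(s,γ₀)) ← ⊤` -/
def topRule (Q : String) (s : List Term) : Rule :=
  ⟨.rel (.magic Q (adornOfTerms s)) (bt s (adornOfTerms s)), [.top]⟩

/-- a predicate occurs in a program -/
def predOccursInProg (P : Set Rule) (p : PredSym) : Prop :=
  ∃ r ∈ P, p ∈ r.head.preds ∨ ∃ M ∈ r.body, p ∈ M.preds

/-- a predicate occurs in a dataset -/
def predOccursInData (D : Set TFact) (p : PredSym) : Prop :=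
  ∃ g ∈ D, g.pred = p

/-- a magic predicate -/
def PredSym.IsMagic : PredSym → Prop
  | .magic _ _ => True
  | _ => False

/-! ### Bodies of the rewritten rules -/

/-- `M` is a diamond atom over a magic predicate. -/
def IsMagicDia (M : MAtom) : Prop :=
  ∃ ρ R γ ts, M = .diaPlus ρ (.rel (.magic R γ) ts) ∨ M = .diaMinus ρ (.rel (.magic R γ) ts)

theorem isMagicDia_of_magicBodyAtom {h m : MAtom} (hm : magicBodyAtom h = some m) :
    IsMagicDia m := by
  unfold magicBodyAtom at hm
  split at hm
  · cases hm
    exact ⟨_, _, _, _, Or.inl rfl⟩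
  · cases hm
    exact ⟨_, _, _, _, Or.inr rfl⟩
  · cases hm

theorem IsMagicDia.unadorn {M : MAtom} (h : IsMagicDia M) : IsMagicDia M.unadorn := by
  obtain ⟨ρ, R, γ, ts, rfl | rfl⟩ := h
  · exact ⟨ρ, R, γ, ts, Or.inl rfl⟩
  · exact ⟨ρ, R, γ, ts, Or.inr rfl⟩

theorem IsMagicDia.not_atomIdb {M : MAtom} (h : IsMagicDia M) (P : Program) :
    ¬ atomIdb P M := by
  rintro ⟨n, γ', hn, -⟩
  obtain ⟨ρ, R, γ, ts, rfl | rfl⟩ := h <;> simp [MAtom.preds] at hn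

/-- A rule of the second type is cut off strictly after the leading magic atom, since that atom has
no idb predicate; so the magic atom survives in its body. -/
theorem exists_magic_atom_of_mem_magicProgram {P : Program} {Q : String} {s : List Term} {r : Rule}
    (hr : r ∈ magicProgram P Q s) : ∃ M ∈ r.body, IsMagicDia M := by
  obtain ⟨r₀, hr₀ | hr₀, rfl⟩ := hr
  · obtain ⟨ra, -, m, hm, rfl⟩ := hr₀
    exact ⟨m.unadorn, by simp [Rule.unadorn], (isMagicDia_of_magicBodyAtom hm).unadorn⟩
  · obtain ⟨r₁, ⟨ra, -, m, hm, rfl⟩, i, M, hi, hidb, M', -, rfl⟩ := hr₀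
    have hmd := isMagicDia_of_magicBodyAtom hm
    cases i with
    | zero =>
      simp only [List.getElem?_cons_zero, Option.some.injEq] at hi
      subst hi
      exact absurd hidb (hmd.not_atomIdb P)
    | succ i => exact ⟨m.unadorn, by simp [Rule.unadorn], hmd.unadorn⟩

theorem not_satAt_leastModel_of_isMagicDia {D : Dataset} (hD : DatasetWF D) {M : MAtom}
    (h : IsMagicDia M) (σ : Subst) (t : ℚ) : ¬ satAt (leastModel D) t (M.subst σ) := by
  intro hs
  obtain ⟨ρ, R, γ, ts, rfl | rfl⟩ := h <;>
  · obtain ⟨t₁, -, cs, -, g, hg, hp, -⟩ := hs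
    obtain ⟨-, n, hn⟩ := hD.2 g hg
    rw [hn] at hp
    cases hp

/-! ### The operator `T` and the additional rule -/

theorem subset_TP (P : Program) (ℑ : Interp) (t : ℚ) : ℑ t ⊆ TP P ℑ t :=
  Set.subset_iInter₂ fun _ hJ => hJ.1 t

theorem leastModel_subset_iterates (P : Program) (D : Dataset) (i : ℕ) (t : ℚ) :
    leastModel D t ⊆ iterates P D i t := by
  induction i with
  | zero => exact subset_rfl
  | succ i ih => exact ih.trans (subset_TP P _ t)

/-- The bound terms of the query are its constants, so `termToConst` loses nothing on them. -/
theorem bt_adornOfTerms (s : List Term) :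
    bt s (adornOfTerms s) =
      ((bt s (adornOfTerms s)).map termToConst).map Term.const := by
  induction s with
  | nil => rfl
  | cons a s ih =>
    cases a with
    | var v => simpa [bt, adornOfTerms] using ih
    | const c => simpa [bt, adornOfTerms, termToConst] using ih

theorem satAt_topRule_head (Q : String) (s : List Term) (J : Interp) (t : ℚ) (σ : Subst) :
    satAt J t ((topRule Q s).head.subst σ) ↔
      (PredSym.magic Q (adornOfTerms s), (bt s (adornOfTerms s)).map termToConst) ∈ J t := by
  have hinj : Function.Injective Term.const := fun a b h => by cases h; rfl
  simp only [topRule, MAtom.subst, satAt]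
  rw [bt_adornOfTerms s]
  simp only [List.map_map]
  constructor
  · rintro ⟨cs, hcs, hmem⟩
    have : cs = (bt s (adornOfTerms s)).map termToConst :=
      (hinj.list_map (by rw [List.map_map, ← hcs]; rfl)).symm
    subst this
    exact hmem
  · intro h
    exact ⟨_, by rw [List.map_map]; rfl, h⟩

theorem TP_union_topRule (P : Program) (Q : String) (s : List Term) (ℑ : Interp)
    (hℑ : ∀ t, (PredSym.magic Q (adornOfTerms s),
      (bt s (adornOfTerms s)).map termToConst) ∈ ℑ t) :
    TP (P ∪ {topRule Q s}) ℑ = TP P ℑ := by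
  have key : {J : Interp | (∀ u : ℚ, ℑ u ⊆ J u) ∧
      ∀ r ∈ P ∪ {topRule Q s}, ∀ σ : Subst, ∀ u : ℚ,
        (∀ M ∈ r.body, satAt ℑ u (M.subst σ)) → satAt J u (r.head.subst σ)} =
      {J : Interp | (∀ u : ℚ, ℑ u ⊆ J u) ∧
      ∀ r ∈ P, ∀ σ : Subst, ∀ u : ℚ,
        (∀ M ∈ r.body, satAt ℑ u (M.subst σ)) → satAt J u (r.head.subst σ)} := by
    ext J
    constructor
    · rintro ⟨h1, h2⟩
      exact ⟨h1, fun r hr => h2 r (Or.inl hr)⟩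
    · rintro ⟨h1, h2⟩
      refine ⟨h1, ?_⟩
      rintro r (hr | rfl) σ u hb
      · exact h2 r hr σ u hb
      · exact (satAt_topRule_head Q s J u σ).2 (h1 u (hℑ u))
  unfold TP
  rw [key]

theorem mem_leastModel_magicDataset (D : Dataset) (Q : String) (s : List Term) (t : ℚ) :
    (PredSym.magic Q (adornOfTerms s), (bt s (adornOfTerms s)).map termToConst) ∈
      leastModel (magicDataset D Q s Ivl.all) t :=
  ⟨magicFact Q s Ivl.all, Or.inr rfl, rfl, rfl, trivial, trivial⟩

theorem TP_leastModel_eq (P : Program) (D : Dataset) (Q : String) (s : List Term)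
    (hD : DatasetWF D) :
    TP (magicProgram P Q s ∪ {topRule Q s}) (leastModel D) =
      leastModel (magicDataset D Q s Ivl.all) := by
  funext t
  apply Set.Subset.antisymm
  · refine Set.iInter₂_subset (leastModel (magicDataset D Q s Ivl.all)) ⟨?_, ?_⟩
    · rintro u a ⟨g, hg, h⟩
      exact ⟨g, Or.inl hg, h⟩
    · rintro r (hr | rfl) σ u hb
      · obtain ⟨M, hM, hdia⟩ := exists_magic_atom_of_mem_magicProgram hr
        exact absurd (hb M hM) (not_satAt_leastModel_of_isMagicDia hD hdia σ u)
      · exact (satAt_topRule_head Q s _ u σ).2 (mem_leastModel_magicDataset D Q s u)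
  · rintro ⟨p, cs⟩ ⟨g, hg | rfl, hp, hc, ht⟩
    · exact subset_TP _ _ t ⟨g, hg, hp, hc, ht⟩
    · refine Set.mem_iInter₂.2 fun J hJ => ?_
      -- The body of the additional rule is `⊤`, so it fires under any substitution.
      have hfire := hJ.2 (topRule Q s) (Or.inr rfl) id t (by simp [topRule, MAtom.subst, satAt])
      have hmem := (satAt_topRule_head Q s J t id).1 hfire
      obtain rfl : _ = p := hp
      obtain rfl : _ = cs := hc
      exact hmem

/-- for bounded `P` and `D` and the rewriting computed for
the interval `(−∞,+∞)`, with `P″ = P′ ∪ {m_Q^{γ₀}(bt(s,γ₀)) ← ⊤}`, the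
iterates satisfy `ℑ′_i = ℑ_{i+1}` for all `i ≥ 0`. -/
theorem magic_iterates_shift
    (P : Program) (D : Dataset) (Q : String) (s : List Term) (ρ : Ivl)
    (hP : ProgramWF P) (hnf : NormalForm P) (hD : DatasetWF D)
    (hbP : ProgramBounded P) (hbD : DatasetBounded D) :
    ∀ i : ℕ,
      iterates (magicProgram P Q s) (magicDataset D Q s Ivl.all) i =
      iterates (magicProgram P Q s ∪ {topRule Q s}) D (i + 1) := by
  intro i
  induction i with
  | zero => exact (TP_leastModel_eq P D Q s hD).symm
  | succ i ih =>
    have hmem := fun t => leastModel_subset_iterates (magicProgram P Q s)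
      (magicDataset D Q s Ivl.all) i t (mem_leastModel_magicDataset D Q s t)
    change TP (magicProgram P Q s) (iterates (magicProgram P Q s) _ i) =
      TP (magicProgram P Q s ∪ {topRule Q s})
        (iterates (magicProgram P Q s ∪ {topRule Q s}) D (i + 1))
    rw [← ih, TP_union_topRule _ _ _ _ hmem]
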